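/- Let H and G be separable real Hilbert spaces, let B: G → 2^G be maximally monotone, let C: H → H, let D: G → 2^G have single-valued inverse D^{-1}: G → G, and let L ∈ B(H, G). On K = H ⊕ G define Q(x, v) = {L* v} × (−L x + B^{-1} v) (i.e. the case A = 0) and R(x, v) = (C x, D^{-1} v). Let W ∈ B(H) and U ∈ B(G) be strongly positive self-adjoint with ‖U^{1/2} L W^{1/2}‖ < 1, and let V(x, v) = (W x, (U^{-1} − L W L*)^{-1} v). Fix z = (x, v) ∈ K and (e_1, e_2) ∈ K, and set u = J_{U B^{-1}}( v + U( L( x − W(C x + L* v) ) − D^{-1} v + e_2 ) ) and y = x − W( C x + L* u + e_1 ). Then (y, u) = J_{V Q}( z − V R z + s ), where s = ( −W e_1, (U^{-1} − L W L*)^{-1}( e_2 + L W e_1 ) ). -/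

import Mathlib

open Pointwise
open scoped RealInnerProductSpace

/-- A bounded linear operator on a real Hilbert space is strongly positive self-adjoint
if it is self-adjoint and there is `α > 0` with `⟪x, V x⟫ ≥ α ‖x‖²` for all `x`. -/
def IsSPSA {K : Type*} [NormedAddCommGroup K] [InnerProductSpace ℝ K]
    (V : K →L[ℝ] K) : Prop :=
  (∀ x y : K, ⟪V x, y⟫ = ⟪x, V y⟫) ∧ ∃ α : ℝ, 0 < α ∧ ∀ x : K, α * ‖x‖ ^ 2 ≤ ⟪x, V x⟫

/-- Monotonicity of a set-valued operator. -/
def IsMono {K : Type*} [NormedAddCommGroup K] [InnerProductSpace ℝ K]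
    (A : K → Set K) : Prop :=
  ∀ ⦃x y u v : K⦄, u ∈ A x → v ∈ A y → (0 : ℝ) ≤ ⟪x - y, u - v⟫

/-- Maximal monotonicity of a set-valued operator. -/
def IsMaxMono {K : Type*} [NormedAddCommGroup K] [InnerProductSpace ℝ K]
    (A : K → Set K) : Prop :=
  IsMono A ∧ ∀ B : K → Set K, IsMono B → (∀ x, A x ⊆ B x) → B = A

/-- The set-valued inverse. -/
def svInv {K : Type*} (A : K → Set K) : K → Set K := fun u => {x | u ∈ A x}

/-!
Eliminating `b ∈ B⁻¹u` from the dual update gives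
`U⁻¹v + L(x − W(Cx + L*v)) − D⁻¹v + e₂ = U⁻¹u + b`. Substituting the primal update for `y` removes
`x` and `Cx`, and the terms `−LWL*v` and `−LWL*u` left over turn both occurrences of `U⁻¹` into the
Schur complement `U⁻¹ − LWL*`. Applying its inverse yields the second component of the resolvent
inclusion; the first is the primal update itself.
-/

/-- The preconditioned resolvent `J_{MA} = (Id + MA)⁻¹` of a set-valued operator `A`, itself as a
set-valued operator: `p ∈ J_{MA} z` means `z ∈ p + M(Ap)`. -/
def preconditionedResolvent {E : Type*} [Add E] (M : E → E) (A : E → Set E) : E → Set E :=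
  fun z => {p | ∃ a ∈ A p, z = p + M a}

/-- The primal-dual operator `Q(x, v) = {L*v} × (−Lx + B⁻¹v)` on a direct sum, with `Lstar` in the
role of `L*` and `Binv` in that of `B⁻¹`. -/
def primalDualOperator {H G : Type*} [AddCommGroup G] {p : ENNReal}
    (L : H → G) (Lstar : G → H) (Binv : G → Set G) :
    WithLp p (H × G) → Set (WithLp p (H × G)) :=
  fun z => {q | q.fst = Lstar z.snd ∧ q.snd ∈ {-L z.fst} + Binv z.snd}

theorem exists_mem_leftInverse_eq_add_of_mem_preconditionedResolvent
    {E : Type*} [AddZeroClass E] {M : E → E} {Minv : E →+ E}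
    (hM : Function.LeftInverse Minv M) {A : E → Set E} {z p : E}
    (hp : p ∈ preconditionedResolvent M A z) :
    ∃ a ∈ A p, Minv z = Minv p + a := by
  obtain ⟨a, ha, rfl⟩ := hp
  exact ⟨a, ha, by rw [map_add, hM a]⟩

section AdditiveGroups

variable {H G : Type*} [AddCommGroup H] [AddCommGroup G]

theorem schurComplement_residual_eq {L : H →+ G} {Lstar : G → H} {W : H →+ H} {Uinv : G → G}
    {x y c e₁ : H} {v u d b e₂ : G} (hy : y = x - W (c + Lstar u + e₁))
    (hb : Uinv v + (L (x - W (c + Lstar v)) - d + e₂) = Uinv u + b) :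
    Uinv v - L (W (Lstar v)) - d + (e₂ + L (W e₁)) =
      Uinv u - L (W (Lstar u)) + (-L y + b) := by
  rw [eq_sub_of_add_eq' hb.symm, hy]
  simp only [map_add, map_sub]
  abel

theorem mk_mem_preconditionedResolvent_primalDualOperator {p : ENNReal}
    {L : H → G} {Lstar : G → H} {Binv : G → Set G} {W : H → H} {S : G → G}
    {V : WithLp p (H × G) → WithLp p (H × G)}
    (hV₁ : ∀ z, (V z).fst = W z.fst) (hV₂ : ∀ z, (V z).snd = S z.snd)
    {z : WithLp p (H × G)} {y : H} {u b : G} (hb : b ∈ Binv u)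
    (hz₁ : z.fst = y + W (Lstar u)) (hz₂ : z.snd = u + S (-L y + b)) :
    WithLp.toLp p (y, u) ∈ preconditionedResolvent V (primalDualOperator L Lstar Binv) z := by
  refine ⟨WithLp.toLp p (Lstar u, -L y + b), ⟨rfl, Set.add_mem_add rfl hb⟩, ?_⟩
  apply WithLp.ofLp_injective
  apply Prod.ext
  · exact hz₁.trans (congrArg (y + ·) (hV₁ (WithLp.toLp p (Lstar u, -L y + b)))).symm
  · exact hz₂.trans (congrArg (u + ·) (hV₂ (WithLp.toLp p (Lstar u, -L y + b)))).symm

theorem stmt_13_general {p : ENNReal} {Binv : G → Set G} {C : H → H} {Dinv : G → G}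
    {L : H →+ G} {Lstar : G → H} {W : H →+ H} {U : G → G} {Uinv S : G →+ G}
    (hU : Function.LeftInverse Uinv U)
    (hS : Function.LeftInverse S fun w => Uinv w - L (W (Lstar w)))
    {V R : WithLp p (H × G) → WithLp p (H × G)}
    (hV₁ : ∀ z, (V z).fst = W z.fst) (hV₂ : ∀ z, (V z).snd = S z.snd)
    (hR : ∀ z, R z = WithLp.toLp p (C z.fst, Dinv z.snd))
    {x y e₁ : H} {v u e₂ : G}
    (hu : u ∈ preconditionedResolvent U Binv
      (v + U (L (x - W (C x + Lstar v)) - Dinv v + e₂)))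
    (hy : y = x - W (C x + Lstar u + e₁)) :
    WithLp.toLp p (y, u) ∈ preconditionedResolvent V (primalDualOperator L Lstar Binv)
      (WithLp.toLp p (x, v) - V (R (WithLp.toLp p (x, v))) +
        WithLp.toLp p (-W e₁, S (e₂ + L (W e₁)))) := by
  obtain ⟨b, hb, hub⟩ := exists_mem_leftInverse_eq_add_of_mem_preconditionedResolvent hU hu
  rw [map_add, hU] at hub
  have primal : x - W (C x) + -W e₁ = y + W (Lstar u) := by
    rw [hy]
    simp only [map_add]
    abel
  have dual : v - S (Dinv v) + S (e₂ + L (W e₁)) = u + S (-L y + b) := by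
    simpa only [map_add S (_ + _), map_add S (_ - _), map_sub S _ (Dinv v), hS _]
      using congrArg S (schurComplement_residual_eq hy hub)
  apply mk_mem_preconditionedResolvent_primalDualOperator hV₁ hV₂ hb
  · rw [WithLp.add_fst, WithLp.sub_fst, hV₁, hR]
    exact primal
  · rw [WithLp.add_snd, WithLp.sub_snd, hV₂, hR]
    exact dual

end AdditiveGroups

/-- with `Q(x,v) = {L*v} × (−Lx + B⁻¹v)` (the case `A = 0`),
`R(x,v) = (Cx, D⁻¹v)` and the diagonal preconditioner `V(x,v) = (Wx, (U⁻¹ − LWL*)⁻¹v)`, the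
point `(y, u)` computed by the second primal-dual update equals `J_{VQ}(z − VRz + s)`. -/
theorem stmt_13
    {H : Type*} [NormedAddCommGroup H] [InnerProductSpace ℝ H] [CompleteSpace H]
    [TopologicalSpace.SeparableSpace H]
    {G : Type*} [NormedAddCommGroup G] [InnerProductSpace ℝ G] [CompleteSpace G]
    [TopologicalSpace.SeparableSpace G]
    (B : G → Set G) (hB : IsMaxMono B)
    (C : H → H) (D : G → Set G) (Dinv : G → G)
    (hDinv : ∀ u : G, {x : G | u ∈ D x} = {Dinv u})
    (L : H →L[ℝ] G)
    (W Winv Whalf : H →L[ℝ] H) (U Uinv Uhalf : G →L[ℝ] G)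
    (hW : IsSPSA W) (hU : IsSPSA U)
    (hWhalfSPSA : IsSPSA Whalf) (hUhalfSPSA : IsSPSA Uhalf)
    (hWhalf : ∀ x : H, Whalf (Whalf x) = W x) (hUhalf : ∀ v : G, Uhalf (Uhalf v) = U v)
    (hWinv : ∀ x : H, W (Winv x) = x) (hWinv' : ∀ x : H, Winv (W x) = x)
    (hUinv : ∀ v : G, U (Uinv v) = v) (hUinv' : ∀ v : G, Uinv (U v) = v)
    (hnorm : ‖Uhalf.comp (L.comp Whalf)‖ < 1)
    -- `S` is the inverse of `U⁻¹ − LWL*`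
    (S : G →L[ℝ] G)
    (hS : ∀ v : G, (Uinv - L.comp (W.comp (ContinuousLinearMap.adjoint L))) (S v) = v)
    (hS' : ∀ v : G, S ((Uinv - L.comp (W.comp (ContinuousLinearMap.adjoint L))) v) = v)
    (V : WithLp 2 (H × G) →L[ℝ] WithLp 2 (H × G))
    (hV1 : ∀ z : WithLp 2 (H × G),
      (WithLp.equiv 2 (H × G) (V z)).1 = W (WithLp.equiv 2 (H × G) z).1)
    (hV2 : ∀ z : WithLp 2 (H × G),
      (WithLp.equiv 2 (H × G) (V z)).2 = S (WithLp.equiv 2 (H × G) z).2)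
    (R : WithLp 2 (H × G) → WithLp 2 (H × G))
    (hR : ∀ z : WithLp 2 (H × G),
      R z = (WithLp.equiv 2 (H × G)).symm
        (C (WithLp.equiv 2 (H × G) z).1, Dinv (WithLp.equiv 2 (H × G) z).2))
    -- the fixed points and errors
    (x : H) (v : G) (e1 : H) (e2 : G)
    -- `u = J_{UB⁻¹}(v + U(L(x − W(Cx + L*v)) − D⁻¹v + e₂))`
    (u : G) (hu : ∃ b ∈ svInv B u,
      v + U (L (x - W (C x + ContinuousLinearMap.adjoint L v)) - Dinv v + e2) = u + U b)
    -- `y = x − W(Cx + L*u + e₁)`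
    (y : H) (hy : y = x - W (C x + ContinuousLinearMap.adjoint L u + e1)) :
    -- conclusion: `(y,u) = J_{VQ}(z − VRz + s)`, i.e. `z − VRz + s ∈ (y,u) + V(Q(y,u))`
    ∃ qq : WithLp 2 (H × G),
      (WithLp.equiv 2 (H × G) qq).1 = ContinuousLinearMap.adjoint L u ∧
      (WithLp.equiv 2 (H × G) qq).2 ∈ {-(L y)} + svInv B u ∧
      (WithLp.equiv 2 (H × G)).symm (x, v)
          - V (R ((WithLp.equiv 2 (H × G)).symm (x, v)))
          + (WithLp.equiv 2 (H × G)).symm (-(W e1), S (e2 + L (W e1)))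
        = (WithLp.equiv 2 (H × G)).symm (y, u) + V qq := by
  obtain ⟨q, ⟨hq₁, hq₂⟩, hq⟩ := stmt_13_general (L := (L : H →+ G)) (W := (W : H →+ H))
    (Uinv := (Uinv : G →+ G)) (S := (S : G →+ G)) hUinv' hS' hV1 hV2 hR hu hy
  exact ⟨q, hq₁, hq₂, hq⟩
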